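/- arXiv:1709.08359 — 3 statements merged into one kernel-verified Lean document; each statement's English description precedes it below -/
import Mathlib

section
/- Let n ≥ 1, let r be a binary relation on Fin n, and let A : Matrix (Fin n) (Fin n) ℝ be its adjacency matrix. Set B = (1/(n+1)) • A. Then the matrix 1 - B is invertible, its inverse equals the convergent series ∑' k, B^k, and for all indices i, j we have ((1 - B)⁻¹) i j ≠ 0 if and only if Relation.ReflTransGen r i j holds (i.e., (i,j) lies in the reflexive-transitive closure of r). -/
open Matrix

/-!
Every entry of `B` lies in `[0, 1/(n+1)]`, so by induction every entry of `B ^ k` lies in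
`[0, (n/(n+1)) ^ k]` (`pow_entry_le`). The series `∑ B ^ k` therefore converges entrywise and is a
two-sided inverse of `1 - B`. All its terms are entrywise nonnegative, so its `(i, j)` entry is
nonzero exactly when some `B ^ k` has a nonzero `(i, j)` entry. Since `B i j ≠ 0` exactly when
`r i j`, this happens exactly when some `r`-path (of length `k`) leads from `i` to `j`.
-/

theorem pow_entry_nonneg {n : ℕ} {B : Matrix (Fin n) (Fin n) ℝ} (h0 : ∀ i j, 0 ≤ B i j)
    (k : ℕ) (i j : Fin n) : 0 ≤ (B ^ k) i j := by
  induction k generalizing j with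
  | zero =>
    rw [pow_zero, Matrix.one_apply]
    split_ifs <;> norm_num
  | succ k ih =>
    rw [pow_succ, Matrix.mul_apply]
    exact Finset.sum_nonneg fun l _ => mul_nonneg (ih l) (h0 l j)

theorem pow_entry_le {n : ℕ} {B : Matrix (Fin n) (Fin n) ℝ} (h0 : ∀ i j, 0 ≤ B i j)
    (h1 : ∀ i j, B i j ≤ 1 / ((n : ℝ) + 1)) (k : ℕ) (i j : Fin n) :
    (B ^ k) i j ≤ ((n : ℝ) / (n + 1)) ^ k := by
  induction k generalizing j with
  | zero =>
    rw [pow_zero, pow_zero, Matrix.one_apply]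
    split_ifs <;> norm_num
  | succ k ih =>
    rw [pow_succ, Matrix.mul_apply]
    calc ∑ l, (B ^ k) i l * B l j
        ≤ ∑ _l : Fin n, ((n : ℝ) / (n + 1)) ^ k * (1 / ((n : ℝ) + 1)) :=
          Finset.sum_le_sum fun l _ => mul_le_mul (ih l) (h1 l j) (h0 l j) (by positivity)
      _ = ((n : ℝ) / (n + 1)) ^ (k + 1) := by
          rw [Finset.sum_const, Finset.card_univ, Fintype.card_fin, nsmul_eq_mul]
          ring

/-- Some power of a nonnegative matrix has a positive `(i, j)` entry exactly when `j` can be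
reached from `i` along positive entries. -/
theorem exists_pow_entry_pos_iff {n : ℕ} {B : Matrix (Fin n) (Fin n) ℝ}
    {r : Fin n → Fin n → Prop} (h0 : ∀ i j, 0 ≤ B i j) (hr : ∀ i j, 0 < B i j ↔ r i j)
    (i j : Fin n) : (∃ k, 0 < (B ^ k) i j) ↔ Relation.ReflTransGen r i j := by
  constructor
  · rintro ⟨k, hk⟩
    induction k generalizing j with
    | zero =>
      rw [pow_zero, Matrix.one_apply] at hk
      split_ifs at hk with h
      · exact h ▸ .refl
      · exact absurd hk (lt_irrefl _)
    | succ k ih =>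
      rw [pow_succ, Matrix.mul_apply] at hk
      obtain ⟨l, -, hl⟩ := Finset.exists_lt_of_sum_lt (f := fun _ => (0 : ℝ)) (by simpa using hk)
      have hp := pow_entry_nonneg h0 k i l
      exact (ih l (pos_of_mul_pos_left hl (h0 l j))).tail
        ((hr l j).1 (pos_of_mul_pos_right hl hp))
  · intro h
    induction h with
    | refl => exact ⟨0, by simp⟩
    | @tail l j _ hlj ih =>
      obtain ⟨k, hk⟩ := ih
      refine ⟨k + 1, ?_⟩
      rw [pow_succ, Matrix.mul_apply]
      exact Finset.sum_pos' (fun m _ => mul_nonneg (pow_entry_nonneg h0 k i m) (h0 m j))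
        ⟨l, Finset.mem_univ l, mul_pos hk ((hr l j).2 hlj)⟩

theorem stmt_0 (n : ℕ) (hn : 1 ≤ n) (r : Fin n → Fin n → Prop) [DecidableRel r]
    (A B : Matrix (Fin n) (Fin n) ℝ)
    (hA : ∀ i j, A i j = if r i j then 1 else 0)
    (hB : B = (1 / ((n : ℝ) + 1)) • A) :
    IsUnit (1 - B) ∧ (1 - B)⁻¹ = ∑' k : ℕ, B ^ k ∧
      ∀ i j, (1 - B)⁻¹ i j ≠ 0 ↔ Relation.ReflTransGen r i j := by
  have hpos : (0 : ℝ) < 1 / ((n : ℝ) + 1) := by positivity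
  have hBe : ∀ i j, B i j = if r i j then 1 / ((n : ℝ) + 1) else 0 := by
    intro i j
    rw [hB, Matrix.smul_apply, hA, smul_eq_mul, mul_ite, mul_one, mul_zero]
  have h0 : ∀ i j, 0 ≤ B i j := by
    intro i j
    rw [hBe]
    split_ifs
    exacts [hpos.le, le_rfl]
  have h1 : ∀ i j, B i j ≤ 1 / ((n : ℝ) + 1) := by
    intro i j
    rw [hBe]
    split_ifs
    exacts [le_rfl, hpos.le]
  have hr : ∀ i j, 0 < B i j ↔ r i j := by
    intro i j
    rw [hBe]
    split_ifs with h
    · exact iff_of_true hpos h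
    · exact iff_of_false (lt_irrefl _) h
  have hq : (n : ℝ) / (n + 1) < 1 := by
    rw [div_lt_one (by positivity)]
    exact lt_add_one _
  have hse : ∀ i j, Summable fun k : ℕ => (B ^ k) i j := fun i j =>
    Summable.of_nonneg_of_le (fun k => pow_entry_nonneg h0 k i j)
      (fun k => pow_entry_le h0 h1 k i j) (summable_geometric_of_lt_one (by positivity) hq)
  have hs : Summable fun k : ℕ => B ^ k :=
    Pi.summable.2 fun i => Pi.summable.2 fun j => hse i j
  have hinv : (1 - B)⁻¹ = ∑' k : ℕ, B ^ k := Matrix.inv_eq_right_inv hs.one_sub_mul_tsum_pow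
  refine ⟨⟨⟨_, _, hs.one_sub_mul_tsum_pow, hs.tsum_pow_mul_one_sub⟩, rfl⟩, hinv, fun i j => ?_⟩
  have hent : (1 - B)⁻¹ i j = ∑' k : ℕ, (B ^ k) i j := by
    have hi : HasSum (fun k : ℕ => (B ^ k) i) ((∑' k : ℕ, B ^ k) i) :=
      Pi.hasSum.1 hs.hasSum i
    rw [hinv]
    exact (Pi.hasSum.1 hi j).tsum_eq.symm
  rw [hent, ← exists_pow_entry_pos_iff h0 hr]
  constructor
  · intro h
    by_contra! hc
    apply h
    have hz : ∀ k, (B ^ k) i j = 0 := fun k => le_antisymm (hc k) (pow_entry_nonneg h0 k i j)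
    simp only [hz, tsum_zero]
  · rintro ⟨k, hk⟩
    exact ((hse i j).tsum_pos (fun m => pow_entry_nonneg h0 m i j) k hk).ne'
end

section
/- Let V be a finite type and let R be a symmetric, irreflexive binary relation on V (R x y → R y x, and ¬R x x for all x). Let T be the transitive closure (Relation.TransGen) of the composed relation R ∘ R, where (R ∘ R) a c means ∃ b, R a b ∧ R b c. Then R is bipartite — i.e., there exists f : V → Bool such that R x y implies f x ≠ f y — if and only if there do not exist x, y with R x y and T y x. -/
/-!
A proper 2-coloring is constant along `R ∘ R`, hence along its transitive closure, so no `R`-edge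
can be closed up by `T`. Conversely, choose a root in each connected component of `R` and color a
vertex by whether an even walk leads to it from its root. Two adjacent vertices both at even
distance would be joined by an even walk, which the hypothesis forbids; and if a vertex is not
reached by an even walk then it is reached by an odd one, which extends to an even walk to each of
its neighbors.
-/

open Relation in
theorem stmt_8 (V : Type*) [Fintype V] (R : V → V → Prop)
    (hsymm : ∀ x y, R x y → R y x)
    (hirrefl : ∀ x, ¬ R x x)
    (T : V → V → Prop)
    (hT : T = Relation.TransGen (fun a c => ∃ b, R a b ∧ R b c)) :
    (∃ f : V → Bool, ∀ x y, R x y → f x ≠ f y) ↔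
      ¬ ∃ x y, R x y ∧ T y x := by
  classical
  subst hT
  constructor
  · rintro ⟨f, hf⟩ ⟨x, y, hxy, hyx⟩
    have step : ∀ p q r : Bool, p ≠ q → q ≠ r → p = r := by decide
    have key : f y = f x := by
      clear hxy
      induction hyx with
      | single h =>
        obtain ⟨b, h1, h2⟩ := h
        exact step _ _ _ (hf _ _ h1) (hf _ _ h2)
      | tail _ h ih =>
        obtain ⟨b, h1, h2⟩ := h
        exact ih.trans (step _ _ _ (hf _ _ h1) (hf _ _ h2))
    exact hf x y hxy key.symm
  · intro hno
    set S : V → V → Prop := fun a c => ∃ b, R a b ∧ R b c with hS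
    have hSsymm : ∀ a c, ReflTransGen S a c → ReflTransGen S c a := by
      intro a c h
      induction h with
      | refl => exact .refl
      | tail _ h ih =>
        obtain ⟨b, h1, h2⟩ := h
        exact .head ⟨b, hsymm _ _ h2, hsymm _ _ h1⟩ ih
    have hRsymm : ∀ a c, ReflTransGen R a c → ReflTransGen R c a := by
      intro a c h
      induction h with
      | refl => exact .refl
      | tail _ h ih => exact .head (hsymm _ _ h) ih
    -- Every walk from `r` has even length or is an even walk followed by one more edge.
    have parity : ∀ r x, ReflTransGen R r x →
        ReflTransGen S r x ∨ ∃ w, ReflTransGen S r w ∧ R w x := by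
      intro r x h
      induction h with
      | refl => exact .inl .refl
      | tail _ h ih =>
        rcases ih with ih | ⟨w, hw, hwx⟩
        · exact .inr ⟨_, ih, h⟩
        · exact .inl (hw.tail ⟨_, hwx, h⟩)
    let s : Setoid V := ⟨ReflTransGen R, fun _ => .refl, fun h => hRsymm _ _ h,
      fun h1 h2 => h1.trans h2⟩
    let root : V → V := fun x => (Quotient.mk s x).out
    have hroot : ∀ x, ReflTransGen R (root x) x := fun x => Quotient.mk_out (s := s) x
    refine ⟨fun x => decide (ReflTransGen S (root x) x), fun x y hxy heq => ?_⟩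
    have hr : root x = root y :=
      congrArg Quotient.out (Quotient.sound (s := s) (ReflTransGen.single hxy))
    have hiff : ReflTransGen S (root x) x ↔ ReflTransGen S (root x) y := by
      simpa [← hr] using heq
    by_cases hx : ReflTransGen S (root x) x
    · have hyx : ReflTransGen S y x := (hSsymm _ _ (hiff.1 hx)).trans hx
      rcases reflTransGen_iff_eq_or_transGen.1 hyx with rfl | h
      · exact hirrefl _ hxy
      · exact hno ⟨x, y, hxy, h⟩
    · rcases parity _ _ (hroot x) with h | ⟨w, hw, hwx⟩
      · exact hx h
      · exact hx (hiff.2 (hw.tail ⟨x, hwx, hxy⟩))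
end

section
/- A matrix A : Matrix (Fin n) (Fin n) ℂ is NOT diagonalizable if and only if there exists an invertible matrix Z such that J = Z * A * Z⁻¹ satisfies: (i) J i j = 0 whenever j ≠ i and (j : ℕ) ≠ (i : ℕ) + 1 (all entries vanish except on the diagonal and superdiagonal); (ii) every superdiagonal entry (those J i j with (j : ℕ) = (i : ℕ) + 1) is 0 or 1; (iii) at least one superdiagonal entry equals 1; and (iv) whenever a superdiagonal entry J i j (with (j : ℕ) = (i : ℕ) + 1) is nonzero, the adjacent diagonal entries are equal: J i i = J j j. -/
/-!
A non-diagonalizable matrix acquires the form described by (i)-(iv) through its Jordan normal form,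
which is built here from scratch, by induction on the dimension (`exists_isJordanBasis`).

Splitting off one Jordan block goes as follows. Let `μ` be an eigenvalue of `f` and `N = f - μ`. At
the step where the kernels of the powers of `N` stabilize there are `k` and `v` with
`N ^ (k + 1) v = 0` and `N ^ k v ∉ range (N ^ (k + 1))` (`exists_chain_generator`). Choose a linear
form `φ` that vanishes on `range (N ^ (k + 1))` but not at `N ^ k v`, and put
`Φ w = (φ w, φ (N w), …, φ (N ^ k w))`. The matrix formed by the images under `Φ` of the chain
`N ^ k v, …, N v, v` is upper triangular with the nonzero number `φ (N ^ k v)` on the diagonal.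
Hence the chain is linearly independent and its span, on which `f` acts by a single Jordan block, is
a complement of the `f`-invariant subspace `ker Φ` (`exists_block_isCompl`). The induction hypothesis
applies to `ker Φ`, and the two bases are concatenated (`exists_isJordanBasis_of_isCompl`).

If all superdiagonal entries of the Jordan form vanish, it is diagonal, so a non-diagonalizable
matrix has an entry `1` there. Conversely, let `(i, j)` be the first superdiagonal position with
entry `1` and `μ` the common value of the adjacent diagonal entries. Then `(J - μ) e_j = e_i ≠ 0`
and `(J - μ) e_i = 0`, whereas for a diagonalizable matrix the kernels of `J - μ` and `(J - μ) ^ 2`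
coincide (`mulVec_eq_zero_of_diagonalizable`).
-/

open Matrix

/-- The matrix `J` is block diagonal with upper Jordan blocks: it vanishes off the diagonal and the
superdiagonal, its superdiagonal entries are `0` or `1`, and a nonzero superdiagonal entry joins two
equal diagonal entries. -/
def IsJordanForm {K : Type*} [Field K] {n : ℕ} (J : Matrix (Fin n) (Fin n) K) : Prop :=
  (∀ i j : Fin n, j ≠ i → (j : ℕ) ≠ (i : ℕ) + 1 → J i j = 0) ∧
  (∀ i j : Fin n, (j : ℕ) = (i : ℕ) + 1 → J i j = 0 ∨ J i j = 1) ∧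
  (∀ i j : Fin n, (j : ℕ) = (i : ℕ) + 1 → J i j ≠ 0 → J i i = J j j)

/-- The endomorphism `f` acts on the family `b` through a matrix in Jordan form. The family need not
span the space, so a basis of an invariant subspace can be used without restricting `f`. -/
def IsJordanFamily {K V : Type*} [Field K] [AddCommGroup V] [Module K V] {n : ℕ}
    (f : V →ₗ[K] V) (b : Fin n → V) : Prop :=
  ∃ J : Matrix (Fin n) (Fin n) K, IsJordanForm J ∧ ∀ j, f (b j) = ∑ i, J i j • b i

theorem IsJordanForm.blockDiag {K : Type*} [Field K] {k m : ℕ}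
    {J₁ : Matrix (Fin k) (Fin k) K} {J₂ : Matrix (Fin m) (Fin m) K}
    (h₁ : IsJordanForm J₁) (h₂ : IsJordanForm J₂) :
    IsJordanForm (Matrix.reindex finSumFinEquiv finSumFinEquiv
      (Matrix.fromBlocks J₁ 0 0 J₂)) := by
  obtain ⟨a₁, b₁, c₁⟩ := h₁
  obtain ⟨a₂, b₂, c₂⟩ := h₂
  refine ⟨fun i j => ?_, fun i j => ?_, fun i j => ?_⟩ <;>
    refine Fin.addCases (fun i => ?_) (fun i => ?_) i <;>
    refine Fin.addCases (fun j => ?_) (fun j => ?_) j <;>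
    simp [add_assoc]
  · exact a₁ i j
  · exact a₂ i j
  · exact b₁ i j
  · exact b₂ i j
  · exact c₁ i j
  · exact c₂ i j

theorem exists_isJordanBasis_of_isCompl {K V : Type*} [Field K] [AddCommGroup V] [Module K V]
    (f : V →ₗ[K] V) {p q : Submodule K V} (h : IsCompl p q) {k m : ℕ}
    (bp : Module.Basis (Fin k) K p) (bq : Module.Basis (Fin m) K q)
    (hp : IsJordanFamily f (fun i => (bp i : V))) (hq : IsJordanFamily f (fun i => (bq i : V))) :
    ∃ b : Module.Basis (Fin (k + m)) K V, IsJordanFamily f b := by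
  obtain ⟨Jp, hJp, hp⟩ := hp
  obtain ⟨Jq, hJq, hq⟩ := hq
  refine ⟨((bp.prod bq).map (Submodule.prodEquivOfIsCompl p q h)).reindex finSumFinEquiv,
    _, hJp.blockDiag hJq, fun j => ?_⟩
  rw [← finSumFinEquiv.sum_comp]
  refine Fin.addCases (fun j => ?_) (fun j => ?_) j
  · simpa using hp j
  · simpa using hq j

/-- Taking the least `m` with `ker N ^ m = ker N ^ (m + 1)`, the vector `v` lies in `ker N ^ m` but
not in `ker N ^ (m - 1)`. -/
theorem exists_chain_generator {K V : Type*} [Field K] [AddCommGroup V] [Module K V]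
    [FiniteDimensional K V] (N : Module.End K V) (hN : LinearMap.ker N ≠ ⊥) :
    ∃ (k : ℕ) (v : V), (N ^ (k + 1)) v = 0 ∧ (N ^ k) v ∉ LinearMap.range (N ^ (k + 1)) := by
  classical
  have hex : ∃ m : ℕ, LinearMap.ker (N ^ m) = LinearMap.ker (N ^ (m + 1)) := by
    obtain ⟨k, -, hk⟩ := Module.End.exists_ker_pow_eq_ker_pow_succ N
    exact ⟨k, hk⟩
  have hs := Nat.find_spec hex
  have hmin := fun m => Nat.find_min (m := m) hex
  generalize Nat.find hex = m at hs hmin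
  obtain _ | k := m
  · exact absurd (by simpa [Module.End.one_eq_id] using hs.symm) hN
  have hlt : LinearMap.ker (N ^ k) < LinearMap.ker (N ^ (k + 1)) := by
    refine lt_of_le_of_ne (fun x hx => ?_) (hmin k (Nat.lt_succ_self k))
    rw [LinearMap.mem_ker] at hx ⊢
    rw [pow_succ', Module.End.mul_apply, hx, map_zero]
  obtain ⟨v, hv, hv'⟩ := SetLike.exists_of_lt hlt
  rw [LinearMap.mem_ker] at hv hv'
  refine ⟨k, v, hv, ?_⟩
  rintro ⟨w, hw⟩
  have hw2 : w ∈ LinearMap.ker (N ^ (k + 1 + 1)) := by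
    rw [LinearMap.mem_ker, pow_succ', Module.End.mul_apply, hw, ← Module.End.mul_apply, ← pow_succ',
      hv]
  rw [← hs, LinearMap.mem_ker, hw] at hw2
  exact hv' hw2

/-- A nonzero finite-dimensional space with an endomorphism over an algebraically closed field
splits off a single Jordan block. -/
theorem exists_block_isCompl {K V : Type*} [Field K] [IsAlgClosed K] [AddCommGroup V] [Module K V]
    [FiniteDimensional K V] [Nontrivial V] (f : V →ₗ[K] V) :
    ∃ (p q : Submodule K V) (k : ℕ) (b : Module.Basis (Fin (k + 1)) K p),
      IsCompl p q ∧ IsJordanFamily f (fun i => (b i : V)) ∧ ∀ x ∈ q, f x ∈ q := by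
  obtain ⟨μ, hμ⟩ := Module.End.exists_eigenvalue f
  obtain ⟨N, hN⟩ : ∃ N : Module.End K V, N = f - μ • (1 : Module.End K V) := ⟨_, rfl⟩
  have hf : ∀ x, f x = μ • x + N x := by
    intro x; rw [hN]; simp
  have hker : LinearMap.ker N ≠ ⊥ := by
    rw [hN, ← Module.End.eigenspace_def]
    exact hμ
  obtain ⟨k, v, hv, hv'⟩ := exists_chain_generator N hker
  obtain ⟨φ, hφ, hφ'⟩ := Submodule.exists_le_ker_of_notMem hv'
  have hφN : ∀ w, φ ((N ^ (k + 1)) w) = 0 := fun w => hφ' ⟨w, rfl⟩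
  have hvan : ∀ m, k + 1 ≤ m → (N ^ m) v = 0 := by
    intro m hm
    obtain ⟨d, rfl⟩ := Nat.exists_eq_add_of_le' hm
    rw [pow_add, Module.End.mul_apply, hv, map_zero]
  let Φ : V →ₗ[K] (Fin (k + 1) → K) := LinearMap.pi fun i => φ ∘ₗ (N ^ (i : ℕ))
  have hΦ : ∀ w i, Φ w i = φ ((N ^ (i : ℕ)) w) := fun _ _ => rfl
  -- the eigenvector `N ^ k v` comes first, which puts the entries `1` above the diagonal
  let c : Fin (k + 1) → V := fun j => (N ^ (k - (j : ℕ))) v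
  have hΦc : ∀ i j, Φ (c j) i = φ ((N ^ ((i : ℕ) + (k - (j : ℕ)))) v) := by
    intro i j
    rw [hΦ, pow_add, Module.End.mul_apply]
  have hli : LinearIndependent K (Φ ∘ c) := by
    let M : Matrix (Fin (k + 1)) (Fin (k + 1)) K := Matrix.of fun i j => Φ (c j) i
    have hM : M.IsUpperTriangular := by
      intro i j hij
      have : (j : ℕ) < i := hij
      change Φ (c j) i = 0
      rw [hΦc, hvan _ (by omega), map_zero]
    have hdet : M.det ≠ 0 := by
      rw [Matrix.det_of_isUpperTriangular hM, Finset.prod_ne_zero_iff]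
      intro i _
      change Φ (c i) i ≠ 0
      rw [hΦc, Nat.add_sub_cancel' (Nat.le_of_lt_succ i.2)]
      exact hφ
    exact Matrix.linearIndependent_cols_iff_isUnit.2
      ((Matrix.isUnit_iff_isUnit_det M).2 hdet.isUnit)
  have hc : LinearIndependent K c := hli.of_comp
  have hcompl : IsCompl (Submodule.span K (Set.range c)) (LinearMap.ker Φ) := by
    refine (Submodule.isCompl_iff_disjoint _ _ ?_).2 (Submodule.range_ker_disjoint hli)
    rw [finrank_span_eq_card hc, ← Φ.finrank_range_add_finrank_ker]
    gcongr
    simpa using Submodule.finrank_le (LinearMap.range Φ)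
  refine ⟨_, _, k, Module.Basis.span hc, hcompl,
    ⟨Matrix.of fun i j => if i = j then μ else if (j : ℕ) = i + 1 then 1 else 0, ?_, ?_⟩, ?_⟩
  · refine ⟨fun i j h h' => ?_, fun i j h => ?_, fun i j h _ => ?_⟩
    · simp [h.symm, h']
    · right
      have : i ≠ j := by rintro rfl; omega
      simp [this, h]
    · simp
  · intro j
    have hsplit : ∀ i : Fin (k + 1),
        (if i = j then μ else if (j : ℕ) = i + 1 then 1 else 0) • c i =
        (if i = j then μ • c i else 0) + (if (j : ℕ) = i + 1 then c i else 0) := by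
      intro i
      by_cases h : i = j
      · subst h; simp
      · by_cases h' : (j : ℕ) = i + 1 <;> simp [h, h']
    simp only [Module.Basis.span_apply, Matrix.of_apply, hsplit, Finset.sum_add_distrib,
      Finset.sum_ite_eq', Finset.mem_univ, if_true]
    rw [hf]
    congr 1
    obtain ⟨_ | j, hj⟩ := j
    · rw [Finset.sum_eq_zero (fun i _ => by simp)]
      change N ((N ^ k) v) = 0
      rw [← Module.End.mul_apply, ← pow_succ', hv]
    · rw [Finset.sum_eq_single ⟨j, by omega⟩]
      · rw [if_pos rfl]
        change N ((N ^ (k - (j + 1))) v) = (N ^ (k - j)) v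
        rw [← Module.End.mul_apply, ← pow_succ']
        congr 2
        omega
      · intro i _ hi
        rw [if_neg]
        intro h
        exact hi (Fin.ext (by simpa using h.symm))
      · simp
  · intro x hx
    rw [LinearMap.mem_ker] at hx
    rw [hf]
    refine Submodule.add_mem _ (Submodule.smul_mem _ _ hx) ?_
    rw [LinearMap.mem_ker]
    funext i
    -- `Φ (N x)` is `Φ x` shifted by one, and `φ ∘ N ^ (k + 1) = 0` fills the last coordinate
    rw [hΦ, ← Module.End.mul_apply, ← pow_succ]
    by_cases hi : (i : ℕ) = k
    · rw [hi]; exact hφN x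
    · have := congrFun hx ⟨(i : ℕ) + 1, by omega⟩
      exact this

/-- Existence of the Jordan normal form over an algebraically closed field. -/
theorem exists_isJordanBasis {K : Type*} [Field K] [IsAlgClosed K] (n : ℕ) :
    ∀ {V : Type*} [AddCommGroup V] [Module K V] [FiniteDimensional K V] (f : V →ₗ[K] V),
      Module.finrank K V = n → ∃ b : Module.Basis (Fin n) K V, IsJordanFamily f b := by
  induction n using Nat.strong_induction_on with
  | _ n ih =>
  intro V _ _ _ f hn
  obtain rfl | hpos := Nat.eq_zero_or_pos n
  · exact ⟨Module.finBasisOfFinrankEq K V hn, 0,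
      ⟨fun i => i.elim0, fun i => i.elim0, fun i => i.elim0⟩, fun j => j.elim0⟩
  · have : Nontrivial V := Module.nontrivial_of_finrank_pos (R := K) (hn ▸ hpos)
    obtain ⟨p, q, k, bp, hpq, hp, hq⟩ := exists_block_isCompl f
    have hdim := Submodule.finrank_add_eq_of_isCompl hpq
    rw [Module.finrank_eq_card_basis bp, Fintype.card_fin, hn] at hdim
    obtain ⟨bq, J, hJ, hbq⟩ := ih (Module.finrank K q) (by omega) (f.restrict hq) rfl
    obtain ⟨b, hb⟩ := exists_isJordanBasis_of_isCompl f hpq bp bq hp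
      ⟨J, hJ, fun j => by simpa using congrArg Subtype.val (hbq j)⟩
    subst hdim
    exact ⟨b, hb⟩

theorem exists_conj_isJordanForm {n : ℕ} (A : Matrix (Fin n) (Fin n) ℂ) :
    ∃ Z : Matrix (Fin n) (Fin n) ℂ, IsUnit Z ∧ IsJordanForm (Z * A * Z⁻¹) := by
  obtain ⟨b, J, hJ, hb⟩ := exists_isJordanBasis n (Matrix.toLin' A) (by simp)
  have h1 : b.toMatrix (Pi.basisFun ℂ (Fin n)) * (Pi.basisFun ℂ (Fin n)).toMatrix b = 1 :=
    b.toMatrix_mul_toMatrix_flip _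
  refine ⟨b.toMatrix (Pi.basisFun ℂ (Fin n)), IsUnit.of_mul_eq_one _ h1, ?_⟩
  have h2 : LinearMap.toMatrix b b (Matrix.toLin' A) = J := by
    ext i j
    simp [LinearMap.toMatrix_apply, -Matrix.toLin'_apply, hb, Finsupp.single_apply]
  rw [Matrix.inv_eq_right_inv h1]
  rw [← basis_toMatrix_mul_linearMap_toMatrix_mul_basis_toMatrix b (Pi.basisFun ℂ (Fin n)) b
    (Pi.basisFun ℂ (Fin n)), ← Matrix.toLin_eq_toLin',
    LinearMap.toMatrix_toLin] at h2
  rwa [h2]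

/-- For a diagonalizable matrix, a generalized eigenvector of order two is an eigenvector. -/
theorem mulVec_eq_zero_of_diagonalizable {n : ℕ} {J Q D : Matrix (Fin n) (Fin n) ℂ} (hQ : IsUnit Q)
    (hD : ∀ i j, i ≠ j → D i j = 0) (hJ : J * Q = Q * D) (μ : ℂ) (x : Fin n → ℂ)
    (hx : (J - μ • 1) *ᵥ ((J - μ • 1) *ᵥ x) = 0) : (J - μ • 1) *ᵥ x = 0 := by
  obtain ⟨y, rfl⟩ : ∃ y, x = Q *ᵥ y :=
    ⟨Q⁻¹ *ᵥ x, by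
      rw [Matrix.mulVec_mulVec,
        Matrix.mul_nonsing_inv _ ((Matrix.isUnit_iff_isUnit_det Q).1 hQ), Matrix.one_mulVec]⟩
  have hc : ∀ z, (J - μ • 1) *ᵥ (Q *ᵥ z) = Q *ᵥ ((D - μ • 1) *ᵥ z) := by
    intro z
    rw [Matrix.mulVec_mulVec, Matrix.mulVec_mulVec, sub_mul, mul_sub, hJ]
    simp
  have hDz : ∀ z i, ((D - μ • 1) *ᵥ z) i = (D i i - μ) * z i := by
    intro z i
    rw [Matrix.mulVec, dotProduct, Finset.sum_eq_single i]
    · simp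
    · intro j _ hj
      simp [hD i j hj.symm, Matrix.one_apply_ne hj.symm]
    · simp
  rw [hc, hc] at hx
  have h0 := Matrix.mulVec_injective_of_isUnit hQ (hx.trans (Matrix.mulVec_zero Q).symm)
  rw [hc]
  suffices (D - μ • 1) *ᵥ y = 0 by rw [this, Matrix.mulVec_zero]
  funext i
  have := congrFun h0 i
  rw [hDz, hDz] at this
  rw [hDz]
  simp only [Pi.zero_apply, mul_eq_zero] at this ⊢
  tauto

theorem stmt_11 (n : ℕ) (A : Matrix (Fin n) (Fin n) ℂ) :
    (¬ ∃ (P D : Matrix (Fin n) (Fin n) ℂ),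
        IsUnit P ∧ (∀ i j, i ≠ j → D i j = 0) ∧ A = P * D * P⁻¹) ↔
      ∃ Z : Matrix (Fin n) (Fin n) ℂ, IsUnit Z ∧
        (∀ i j : Fin n, j ≠ i → (j : ℕ) ≠ (i : ℕ) + 1 → (Z * A * Z⁻¹) i j = 0) ∧
        (∀ i j : Fin n, (j : ℕ) = (i : ℕ) + 1 →
          (Z * A * Z⁻¹) i j = 0 ∨ (Z * A * Z⁻¹) i j = 1) ∧
        (∃ i j : Fin n, (j : ℕ) = (i : ℕ) + 1 ∧ (Z * A * Z⁻¹) i j = 1) ∧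
        (∀ i j : Fin n, (j : ℕ) = (i : ℕ) + 1 → (Z * A * Z⁻¹) i j ≠ 0 →
          (Z * A * Z⁻¹) i i = (Z * A * Z⁻¹) j j) := by
  constructor
  · intro hnd
    obtain ⟨Z, hZ, h1, h2, h3⟩ := exists_conj_isJordanForm A
    refine ⟨Z, hZ, h1, h2, ?_, h3⟩
    by_contra! hno
    have hdet := (Matrix.isUnit_iff_isUnit_det Z).1 hZ
    refine hnd ⟨Z⁻¹, Z * A * Z⁻¹, (Matrix.isUnit_nonsing_inv_iff).2 hZ, fun i j hij => ?_, ?_⟩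
    · by_cases hj : (j : ℕ) = i + 1
      · exact (h2 i j hj).resolve_right (hno i j hj)
      · exact h1 i j hij.symm hj
    · rw [Matrix.nonsing_inv_nonsing_inv _ hdet, mul_assoc, Matrix.nonsing_inv_mul_cancel_right _ _ hdet,
        Matrix.nonsing_inv_mul_cancel_left _ _ hdet]
  · rintro ⟨Z, hZ, h1, h2, ⟨i', j', hij', hone'⟩, h4⟩ ⟨P, D, hP, hD, hA⟩
    have hdet := (Matrix.isUnit_iff_isUnit_det Z).1 hZ
    have hPdet := (Matrix.isUnit_iff_isUnit_det P).1 hP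
    have hJQ : (Z * A * Z⁻¹) * (Z * P) = (Z * P) * D := by
      rw [← mul_assoc, Matrix.nonsing_inv_mul_cancel_right _ _ hdet, hA, mul_assoc Z,
        Matrix.nonsing_inv_mul_cancel_right _ _ hPdet, mul_assoc]
    generalize Z * A * Z⁻¹ = J at *
    obtain ⟨i, ⟨j, hij, hone⟩, hmin⟩ := WellFounded.has_min (wellFounded_lt (α := Fin n))
      {i | ∃ j : Fin n, (j : ℕ) = i + 1 ∧ J i j = 1} ⟨i', j', hij', hone'⟩
    have hne : i ≠ j := by rintro rfl; omega
    have hdiag : J i i = J j j := h4 i j hij (by rw [hone]; exact one_ne_zero)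
    have hcol : ∀ l, (J - J i i • 1) *ᵥ Pi.single l 1 = (J - J i i • 1).col l := fun l =>
      Matrix.mulVec_single_one _ _
    have hj : (J - J i i • 1) *ᵥ Pi.single j 1 = Pi.single i 1 := by
      rw [hcol]
      funext l
      by_cases hli : l = i
      · subst hli; simp [hone, hne]
      · by_cases hlj : l = j
        · subst hlj; simp [hdiag, hli]
        · have : J l j = 0 := h1 l j (Ne.symm hlj) (fun h => hli (Fin.ext (by omega)))
          simp [this, hli, hlj]
    have hi : (J - J i i • 1) *ᵥ Pi.single i 1 = 0 := by
      rw [hcol]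
      funext l
      by_cases hli : l = i
      · subst hli; simp
      · have : J l i = 0 := by
          by_cases hl : (i : ℕ) = l + 1
          -- minimality of `i` excludes a chain that continues below `e_i`
          · refine (h2 l i hl).resolve_right fun h => hmin l ⟨i, hl, h⟩ ?_
            rw [Fin.lt_def]; omega
          · exact h1 l i (Ne.symm hli) hl
        simp [this, hli]
    have := mulVec_eq_zero_of_diagonalizable (hZ.mul hP) hD hJQ (J i i) (Pi.single j 1)
      (by rw [hj, hi])
    rw [hj] at this
    simpa using congrFun this i
end
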